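/- For every real ε > 0 and every integer k ≥ 1, there exists an integer n ≥ 2 such that for every integer R ≥ 1 divisible by n−1 there is an n-server PIR scheme for a database of k records of R bits each whose total storage is nkR bits (a constant multiple, independent of R, of the database size kR) and whose download complexity is at most (1+ε)·R. -/

import Mathlib

open scoped ENNReal

/-- An `n`-server PIR scheme for a database of `k` records of `R` bits each. -/
structure PIRScheme (n k R : ℕ) where
  /-- The query set for each server. -/
  Q : Fin n → Type
  /-- Each query set is finite. -/
  fintypeQ : ∀ r, Fintype (Q r)
  /-- The storage size (in bits) of each server. -/
  s : Fin n → ℕ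
  /-- The encoding map of each server. -/
  E : (r : Fin n) → (Fin k → Fin R → Bool) → (Fin (s r) → Bool)
  /-- For each record index `ℓ`, a probability distribution on query tuples. -/
  D : Fin k → PMF ((r : Fin n) → Q r)
  /-- The response length of each server on each query. -/
  d : (r : Fin n) → Q r → ℕ
  /-- The deterministic response map of each server. -/
  resp : (r : Fin n) → (q : Q r) → (Fin (s r) → Bool) → (Fin (d r q) → Bool)
  /-- The reconstruction function. -/
  recon : (ℓ : Fin k) → (q : (r : Fin n) → Q r) →
    ((r : Fin n) → (Fin (d r (q r)) → Bool)) → (Fin R → Bool)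
  /-- Correctness. -/
  correct : ∀ (X : Fin k → Fin R → Bool) (ℓ : Fin k) (q : (r : Fin n) → Q r),
    q ∈ (D ℓ).support →
    recon ℓ q (fun r => resp r (q r) (E r X)) = X ℓ
  /-- Privacy: the marginal of each query component does not depend on `ℓ`. -/
  privacy : ∀ (r : Fin n) (ℓ ℓ' : Fin k),
    (D ℓ).map (fun q => q r) = (D ℓ').map (fun q => q r)

attribute [instance] PIRScheme.fintypeQ

/-- A query tuple is possible if it lies in the support of `D ℓ` for some `ℓ`. -/
def PIRScheme.Possible {n k R : ℕ} (S : PIRScheme n k R)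
    (q : (r : Fin n) → S.Q r) : Prop :=
  ∃ ℓ, q ∈ (S.D ℓ).support

/-- The download complexity: the maximum, over possible query tuples, of the
total number of downloaded bits. -/
noncomputable def PIRScheme.downloadComplexity {n k R : ℕ} (S : PIRScheme n k R) : ℕ :=
  letI : DecidablePred S.Possible := Classical.decPred _
  (Finset.univ.filter S.Possible).sup (fun q => ∑ r, S.d r (q r))

/-- The `v`-th block of record `j`: block `0` is zero, the others are the actual blocks. -/
def pirBlock {N k m : ℕ} (X : Fin k → Fin (N * m) → Bool) (j : Fin k) (v : Fin (N + 1))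
    (i : Fin m) : ZMod 2 :=
  Fin.cases (motive := fun _ => ZMod 2) 0
    (fun u => if X j (finProdFinEquiv (u, i)) then 1 else 0) v

/-- The answer to a query. -/
def pirAnswer {N k m : ℕ} (X : Fin k → Fin (N * m) → Bool) (q : Fin k → Fin (N + 1))
    (i : Fin m) : ZMod 2 :=
  ∑ j, pirBlock X j (q j) i

/-- Decoding the stored string. -/
def pirDecode {k L : ℕ} (st : Fin (k * L) → Bool) : Fin k → Fin L → Bool :=
  fun j p => st (finProdFinEquiv (j, p))

theorem pirAnswer_sub {N k m : ℕ} (X : Fin k → Fin (N * m) → Bool) (a : Fin k → Fin (N + 1))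
    (l : Fin k) (u v : Fin (N + 1)) (i : Fin m) :
    pirAnswer X (a + Pi.single l u) i - pirAnswer X (a + Pi.single l v) i
      = pirBlock X l (a l + u) i - pirBlock X l (a l + v) i := by
  unfold pirAnswer
  rw [← Finset.sum_sub_distrib, Finset.sum_eq_single l]
  · simp
  · intro j _ hj
    simp [Pi.single_eq_of_ne hj]
  · simp

theorem pir_bool_aux (x y : ZMod 2) :
    (xor (decide (x = 1)) (decide (y = 1))) = decide (x - y = 1) := by
  revert x y; decide

/-- The scheme. -/
noncomputable def pirScheme (N k m : ℕ) : PIRScheme (N + 1) k (N * m) where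
  Q := fun _ => Fin k → Fin (N + 1)
  fintypeQ := fun _ => inferInstance
  s := fun _ => k * (N * m)
  E := fun _ X t => X (finProdFinEquiv.symm t).1 (finProdFinEquiv.symm t).2
  D := fun l => (PMF.uniformOfFintype (Fin k → Fin (N + 1))).map
    (fun a r => a + Pi.single l r)
  d := fun _ _ => m
  resp := fun _ q st i => decide (pirAnswer (pirDecode st) q i = 1)
  recon := fun l q c p =>
    xor (c ((finProdFinEquiv.symm p).1.succ - q 0 l) (finProdFinEquiv.symm p).2)
      (c (0 - q 0 l) (finProdFinEquiv.symm p).2)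
  correct := by
    intro X l q hq
    rw [PMF.mem_support_map_iff] at hq
    obtain ⟨a, -, rfl⟩ := hq
    funext p
    obtain ⟨⟨u, i⟩, rfl⟩ := finProdFinEquiv.surjective p
    have hX : (pirDecode fun t : Fin (k * (N * m)) =>
        X (finProdFinEquiv.symm t).1 (finProdFinEquiv.symm t).2) = X := by
      funext j p
      simp only [pirDecode, Equiv.symm_apply_apply]
    simp only [hX, Equiv.symm_apply_apply, Pi.single_zero, add_zero]
    rw [pir_bool_aux, pirAnswer_sub]
    simp only [add_sub_cancel, pirBlock, Fin.cases_zero, Fin.cases_succ, sub_zero]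
    cases X l (finProdFinEquiv (u, i)) <;> simp
  privacy := by
    have key : ∀ (r : Fin (N + 1)) (l : Fin k),
        (((PMF.uniformOfFintype (Fin k → Fin (N + 1))).map
          (fun (a : Fin k → Fin (N + 1)) (r : Fin (N + 1)) => a + Pi.single l r)).map
            (fun q => q r)) = PMF.uniformOfFintype (Fin k → Fin (N + 1)) := by
      intro r l
      rw [PMF.map_comp]
      ext b
      rw [PMF.map_apply, tsum_eq_single (b - Pi.single l r)]
      · simp
      · intro a ha
        rw [if_neg]
        rintro rfl
        simp at ha
    intro r l l'
    rw [key, key]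

/-- For every `ε > 0` and every `k ≥ 1` there is a number of
servers `n ≥ 2` such that for every record length `R ≥ 1` divisible by `n - 1`
there is an `n`-server PIR scheme for `k` records of `R` bits each with total
storage `nkR` bits and download complexity at most `(1+ε)·R`. -/
theorem linear_storage_near_optimal_download (ε : ℝ) (hε : 0 < ε) (k : ℕ)
    (hk : 1 ≤ k) :
    ∃ n : ℕ, 2 ≤ n ∧ ∀ R : ℕ, 1 ≤ R → (n - 1) ∣ R →
      ∃ S : PIRScheme n k R,
        (∑ r, S.s r = n * (k * R)) ∧
        (S.downloadComplexity : ℝ) ≤ (1 + ε) * R := by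
  obtain ⟨N, hN⟩ := exists_nat_gt (1 / ε)
  have hN0 : (0 : ℝ) < N := lt_trans (by positivity) hN
  have hN1 : 1 ≤ N := by exact_mod_cast hN0
  refine ⟨N + 1, by omega, ?_⟩
  rintro R - ⟨m, hm⟩
  obtain rfl : R = N * m := hm
  refine ⟨pirScheme N k m, ?_, ?_⟩
  · simp [pirScheme]
  · have h1 : (pirScheme N k m).downloadComplexity ≤ (N + 1) * m := by
      unfold PIRScheme.downloadComplexity
      refine Finset.sup_le fun q _ => ?_
      simp [pirScheme]
    have h2 : ((pirScheme N k m).downloadComplexity : ℝ) ≤ (N + 1) * m := by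
      exact_mod_cast h1
    refine h2.trans ?_
    have h3 : 1 ≤ ε * N := by
      rw [div_lt_iff₀ hε] at hN
      linarith
    have h4 : (0 : ℝ) ≤ m := Nat.cast_nonneg m
    push_cast
    nlinarith [mul_le_mul_of_nonneg_right h3 h4]
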